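/- Let Ω ⊂ ℂⁿ be a bounded domain, φ : Ω → ℝ continuous, and u : Ω → ℝ continuous with compact support in Ω, so that H(φ) and H(φ+u) coincide as sets of holomorphic functions. Fix w ∈ Ω and suppose K_w ∈ H(φ) satisfies ⟨f, K_w⟩_φ = f(w) for all f ∈ H(φ), and K'_w ∈ H(φ+u) satisfies ⟨f, K'_w⟩_{φ+u} = f(w) for all f ∈ H(φ+u). Then T_{φ,e^{−u}} K'_w = K_w, i.e. P_φ(e^{−u}·K'_w) = K_w; equivalently, the inverse of the Toeplitz operator T_{φ,e^{−u}} maps the reproducing kernel of H(φ) at w to the reproducing kernel of H(φ+u) at w. -/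

import Mathlib

open MeasureTheory Complex Filter
open scoped ENNReal Topology BigOperators Real ComplexOrder

noncomputable section

variable {n : ℕ}

/-- Wirtinger derivative `∂f/∂z_j` of a function on `ℂⁿ`. -/
def wDeriv (f : (Fin n → ℂ) → ℂ) (j : Fin n) (z : Fin n → ℂ) : ℂ :=
  (1/2) * (fderiv ℝ f z (Pi.single j 1) - Complex.I * fderiv ℝ f z (Pi.single j Complex.I))

/-- Wirtinger derivative `∂f/∂z̄_j` of a function on `ℂⁿ`. -/
def wDerivBar (f : (Fin n → ℂ) → ℂ) (j : Fin n) (z : Fin n → ℂ) : ℂ :=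
  (1/2) * (fderiv ℝ f z (Pi.single j 1) + Complex.I * fderiv ℝ f z (Pi.single j Complex.I))

/-- Complex Hessian `H_φ(z) = (∂²φ/∂z_j∂z̄_k)_{j,k}` of a real-valued function on `ℂⁿ`. -/
def cHessian (φ : (Fin n → ℂ) → ℝ) (z : Fin n → ℂ) : Matrix (Fin n) (Fin n) ℂ :=
  Matrix.of fun j k => wDerivBar (fun w => wDeriv (fun v => (φ v : ℂ)) j w) k z

/-- A function is plurisubharmonic on `Ω` if it is upper semicontinuous on `Ω` and satisfies
the sub-mean value inequality on every closed complex disc contained in `Ω`. -/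
def PlurisubharmonicOn (Ω : Set (Fin n → ℂ)) (f : (Fin n → ℂ) → ℝ) : Prop :=
  UpperSemicontinuousOn f Ω ∧
  ∀ a b : Fin n → ℂ, (∀ ζ : ℂ, ‖ζ‖ ≤ 1 → a + ζ • b ∈ Ω) →
    f a ≤ (2 * π)⁻¹ * ∫ θ in (0:ℝ)..(2*π), f (a + Complex.exp (θ * Complex.I) • b)

/-- A (bounded) open set `Ω ⊆ ℂⁿ` is pseudoconvex iff `z ↦ -log dist(z, Ωᶜ)` is
plurisubharmonic on `Ω`. -/
def Pseudoconvex (Ω : Set (Fin n → ℂ)) : Prop :=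
  PlurisubharmonicOn Ω fun z => -Real.log (Metric.infDist z Ωᶜ)

/-- `φ ∈ SPSH(Ω)`: smooth on `Ω` with positive definite complex Hessian at every point of `Ω`. -/
def SPSHOn (Ω : Set (Fin n → ℂ)) (φ : (Fin n → ℂ) → ℝ) : Prop :=
  ContDiffOn ℝ (⊤ : ℕ∞) φ Ω ∧ ∀ z ∈ Ω, (cHessian φ z).PosDef

/-- Squared weighted Bergman norm `∫_Ω |f|² e^{-ψ} dλ` (as an extended real,
so that finiteness encodes square-integrability). -/
def wnorm2 (Ω : Set (Fin n → ℂ)) (ψ : (Fin n → ℂ) → ℝ) (f : (Fin n → ℂ) → ℂ) : ℝ≥0∞ :=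
  ∫⁻ z in Ω, ENNReal.ofReal (‖f z‖ ^ 2 * Real.exp (-ψ z))

/-- Membership in the weighted Bergman space `H(ψ)`: holomorphic on `Ω` and
`∫_Ω |f|² e^{-ψ} dλ < ∞`. -/
def MemBergman (Ω : Set (Fin n → ℂ)) (ψ : (Fin n → ℂ) → ℝ) (f : (Fin n → ℂ) → ℂ) : Prop :=
  DifferentiableOn ℂ f Ω ∧ wnorm2 Ω ψ f < ⊤

/-- The diagonal of the Bergman kernel of `H(ψ)`:
`B_ψ(z) = sup {|f(z)|² : f ∈ H(ψ), ‖f‖_ψ ≤ 1}`. -/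
def bergmanDiag (Ω : Set (Fin n → ℂ)) (ψ : (Fin n → ℂ) → ℝ) (z : Fin n → ℂ) : ℝ :=
  sSup {t : ℝ | ∃ f, DifferentiableOn ℂ f Ω ∧ wnorm2 Ω ψ f ≤ 1 ∧ t = ‖f z‖ ^ 2}

/-- Weighted inner product `⟨f,g⟩_ψ = ∫_Ω f ḡ e^{-ψ} dλ`. -/
def wInner (Ω : Set (Fin n → ℂ)) (ψ : (Fin n → ℂ) → ℝ) (f g : (Fin n → ℂ) → ℂ) : ℂ :=
  ∫ z in Ω, f z * (starRingEnd ℂ) (g z) * Real.exp (-ψ z)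

/-- Mixed determinants `D_j(A,B)`, defined so that
`det (s•A + r•B) = ∑_j (n choose j) s^j r^(n-j) D_j(A,B)`: explicitly `D_j(A,B)` is
`(n choose j)⁻¹` times the sum over all `j`-element subsets `S` of the row indices of the
determinant of the matrix whose rows are those of `A` on `S` and those of `B` elsewhere. -/
def mixedDet (A B : Matrix (Fin n) (Fin n) ℂ) (j : ℕ) : ℂ :=
  ((n.choose j : ℂ))⁻¹ *
    ∑ S ∈ Finset.univ.powersetCard j,
      Matrix.det (Matrix.of fun i k => if i ∈ S then A i k else B i k)

theorem aux_sq_int (Ω : Set (Fin n → ℂ)) (hΩo : IsOpen Ω)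
    (ψ : (Fin n → ℂ) → ℝ) (hψ : ContinuousOn ψ Ω) (f : (Fin n → ℂ) → ℂ)
    (hf : MemBergman Ω ψ f) :
    Integrable (fun z => ‖f z‖ ^ 2 * Real.exp (-ψ z)) (volume.restrict Ω) := by
  have hc : ContinuousOn (fun z => ‖f z‖ ^ 2 * Real.exp (-ψ z)) Ω :=
    (hf.1.continuousOn.norm.pow 2).mul (Real.continuous_exp.comp_continuousOn hψ.neg)
  refine ⟨hc.aestronglyMeasurable hΩo.measurableSet, ?_⟩
  rw [hasFiniteIntegral_iff_ofReal (Eventually.of_forall fun z => by positivity)]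
  exact hf.2

theorem aux_int (Ω : Set (Fin n → ℂ)) (hΩo : IsOpen Ω)
    (ψ : (Fin n → ℂ) → ℝ) (hψ : ContinuousOn ψ Ω) (f g : (Fin n → ℂ) → ℂ)
    (hf : MemBergman Ω ψ f) (hg : MemBergman Ω ψ g) :
    Integrable (fun z => f z * (starRingEnd ℂ) (g z) * Real.exp (-ψ z))
      (volume.restrict Ω) := by
  have hc : ContinuousOn (fun z => f z * (starRingEnd ℂ) (g z) * (Real.exp (-ψ z) : ℂ)) Ω :=
    (hf.1.continuousOn.mul (Complex.continuous_conj.comp_continuousOn hg.1.continuousOn)).mul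
      (Complex.continuous_ofReal.comp_continuousOn
        (Real.continuous_exp.comp_continuousOn hψ.neg))
  refine ((aux_sq_int Ω hΩo ψ hψ f hf).add (aux_sq_int Ω hΩo ψ hψ g hg)).mono'
    (hc.aestronglyMeasurable hΩo.measurableSet) (Eventually.of_forall fun z => ?_)
  have he := Real.exp_pos (-ψ z)
  simp only [norm_mul, RCLike.norm_conj, Complex.norm_real, Real.norm_eq_abs, abs_of_pos he,
    Pi.add_apply]
  rw [← add_mul]
  refine mul_le_mul_of_nonneg_right ?_ he.le
  nlinarith [sq_nonneg (‖f z‖ - ‖g z‖), sq_nonneg (‖f z‖), sq_nonneg (‖g z‖)]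

theorem aux_mem (Ω : Set (Fin n → ℂ)) (φ u : (Fin n → ℂ) → ℝ)
    (hu : Continuous u) (huc : HasCompactSupport u) (f : (Fin n → ℂ) → ℂ)
    (hf : MemBergman Ω φ f) : MemBergman Ω (fun z => φ z + u z) f := by
  obtain ⟨C, hC⟩ := hu.bounded_above_of_compact_support huc
  refine ⟨hf.1, ?_⟩
  refine lt_of_le_of_lt (b := ENNReal.ofReal (Real.exp C) * wnorm2 Ω φ f) ?_
    (ENNReal.mul_lt_top ENNReal.ofReal_lt_top hf.2)
  unfold wnorm2
  rw [← lintegral_const_mul' _ _ ENNReal.ofReal_ne_top]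
  refine lintegral_mono fun z => ?_
  rw [← ENNReal.ofReal_mul (Real.exp_pos C).le]
  refine ENNReal.ofReal_le_ofReal ?_
  have h1 : Real.exp (-(φ z + u z)) ≤ Real.exp C * Real.exp (-φ z) := by
    rw [← Real.exp_add]
    have h2 := neg_le_of_abs_le (hC z)
    exact Real.exp_le_exp.2 (by linarith)
  calc _ ≤ ‖f z‖ ^ 2 * (Real.exp C * Real.exp (-φ z)) := by gcongr
    _ = _ := by ring

/-- Let `K_w` be the reproducing kernel of `H(φ)` at `w` and `K'_w` that of
`H(φ+u)` at `w`, where `u` is continuous with compact support in `Ω`.  Then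
`T_{φ,e^{-u}} K'_w = P_φ(e^{-u} K'_w) = K_w`; since `K_w ∈ H(φ)`, this is encoded by the
orthogonality of `e^{-u} K'_w - K_w` to every `f ∈ H(φ)`. -/
theorem toeplitz_maps_kernel_to_kernel
    (Ω : Set (Fin n → ℂ)) (hΩo : IsOpen Ω) (hΩconn : IsConnected Ω)
    (hΩb : Bornology.IsBounded Ω)
    (φ : (Fin n → ℂ) → ℝ) (hφ : ContinuousOn φ Ω)
    (u : (Fin n → ℂ) → ℝ) (hu : Continuous u) (huc : HasCompactSupport u)
    (hus : tsupport u ⊆ Ω)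
    (w : Fin n → ℂ) (hw : w ∈ Ω)
    (Kw K'w : (Fin n → ℂ) → ℂ)
    (hKw : MemBergman Ω φ Kw)
    (hKwrep : ∀ f, MemBergman Ω φ f → wInner Ω φ f Kw = f w)
    (hK'w : MemBergman Ω (fun z => φ z + u z) K'w)
    (hK'wrep : ∀ f, MemBergman Ω (fun z => φ z + u z) f →
      wInner Ω (fun z => φ z + u z) f K'w = f w) :
    ∀ f, MemBergman Ω φ f →
      ∫ z in Ω, (Real.exp (-u z) * K'w z - Kw z) * (starRingEnd ℂ) (f z) *
        Real.exp (-φ z) = 0 := by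
  intro f hf
  have hf' := aux_mem Ω φ u hu huc f hf
  have hφu : ContinuousOn (fun z => φ z + u z) Ω := hφ.add hu.continuousOn
  have i1 := aux_int Ω hΩo _ hφu f K'w hf' hK'w
  have i2 := aux_int Ω hΩo _ hφ f Kw hf hKw
  have e : wInner Ω (fun z => φ z + u z) f K'w - wInner Ω φ f Kw = 0 := by
    rw [hK'wrep f hf', hKwrep f hf, sub_self]
  unfold wInner at e
  rw [← integral_sub i1 i2] at e
  have e2 := congrArg (starRingEnd ℂ) e
  rw [← integral_conj, map_zero] at e2
  rw [← e2]
  congr 1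
  ext z
  simp only [map_sub, map_mul, Complex.conj_conj, Complex.conj_ofReal, neg_add, Real.exp_add,
    Complex.ofReal_mul]
  ring
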